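/- For any R-module M, Gid_R(M) ≤ Gwid_R(M); and if Gwid_R(M) < ∞ then Gid_R(M) = Gwid_R(M), where Gid_R denotes Gorenstein injective dimension. -/

import Mathlib

open CategoryTheory

universe u

noncomputable section

variable (R : Type u) [Ring R]

/-- Vanishing of `Ext^n_R(N, M)` for left `R`-modules, expressed via the `Ext` bifunctor
on the `ℤ`-linear abelian category `ModuleCat R`. -/
def ExtVanish (n : ℕ) (N M : ModuleCat.{u} R) : Prop :=
  Subsingleton (((_root_.Ext ℤ (ModuleCat.{u} R) n).obj (Opposite.op N)).obj M)

/-- An `R`-module is super finitely presented if it admits a resolution by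
finitely generated projective modules. -/
def SuperFinitelyPresented (N : ModuleCat.{u} R) : Prop :=
  ∃ (F : ℕ → ModuleCat.{u} R) (d : ∀ n, F (n + 1) →ₗ[R] F n) (ε : F 0 →ₗ[R] N),
    (∀ n, Module.Finite R (F n)) ∧ (∀ n, Module.Projective R (F n)) ∧
    Function.Surjective ε ∧ Function.Exact (d 0) ε ∧
    (∀ n, Function.Exact (d (n + 1)) (d n))

/-- An `R`-module `W` is weak injective if `Ext^1_R(N, W) = 0` for every super finitely
presented module `N`. -/
def WeakInjective (W : ModuleCat.{u} R) : Prop :=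
  ∀ N : ModuleCat.{u} R, SuperFinitelyPresented R N → ExtVanish R 1 N W

/-- `wid_R M ≤ n` : `Ext^{n+1}_R(N, M) = 0` for every super finitely presented `N`. -/
def WidLE (M : ModuleCat.{u} R) (n : ℕ) : Prop :=
  ∀ N : ModuleCat.{u} R, SuperFinitelyPresented R N → ExtVanish R (n + 1) N M

/-- The weak injective dimension, as an element of `ℕ∞`. -/
def Wid (M : ModuleCat.{u} R) : ℕ∞ :=
  sInf {c : ℕ∞ | ∃ n : ℕ, c = n ∧ WidLE R M n}

/-- A doubly infinite exact complex of injective modules which stays exact after applying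
`Hom_R(W, -)` for every module `W` in the test class `𝒯`. -/
def IsTotallyAcyclicInjComplex (𝒯 : ModuleCat.{u} R → Prop)
    (I : ℤ → ModuleCat.{u} R) (d : ∀ n : ℤ, I n →ₗ[R] I (n + 1)) : Prop :=
  (∀ n, Module.Injective R (I n)) ∧
  (∀ n, Function.Exact (d n) (d (n + 1))) ∧
  (∀ W : ModuleCat.{u} R, 𝒯 W → ∀ n,
    Function.Exact (fun g : W →ₗ[R] I n => (d n).comp g)
      (fun g : W →ₗ[R] I (n + 1) => (d (n + 1)).comp g))

/-- `M` is Gorenstein injective relative to the test class `𝒯` : `M` is the cokernel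
`Coker (I_1 → I_0)` of a `Hom(𝒯, -)`-exact exact complex of injective modules. -/
def GorensteinRelInjective (𝒯 : ModuleCat.{u} R → Prop) (M : ModuleCat.{u} R) : Prop :=
  ∃ (I : ℤ → ModuleCat.{u} R) (d : ∀ n : ℤ, I n →ₗ[R] I (n + 1)) (π : I 0 →ₗ[R] M),
    IsTotallyAcyclicInjComplex R 𝒯 I d ∧
    Function.Surjective π ∧ Function.Exact (d (-1)) π

/-- Gorenstein weak injective modules: the test class is that of weak injective modules. -/
def GorensteinWeakInjective (M : ModuleCat.{u} R) : Prop :=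
  GorensteinRelInjective R (WeakInjective R) M

/-- Gorenstein injective modules: the test class is that of injective modules. -/
def GorensteinInjective (M : ModuleCat.{u} R) : Prop :=
  GorensteinRelInjective R (fun E => Module.Injective R E) M

/-- The data of an exact sequence `0 → M → G^0 → ⋯ → G^n → 0` (the modules `G^i` for
`i > n` being trivial). -/
def IsFiniteCoresolution (M : ModuleCat.{u} R) (n : ℕ) (G : ℕ → ModuleCat.{u} R)
    (d : ∀ i, G i →ₗ[R] G (i + 1)) (ε : M →ₗ[R] G 0) : Prop :=
  Function.Injective ε ∧ Function.Exact ε (d 0) ∧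
  (∀ i, Function.Exact (d i) (d (i + 1))) ∧
  (∀ i, n < i → ∀ x : G i, x = 0)

/-- `Gwid_R M ≤ n` : `M` has a coresolution of length `n` by Gorenstein weak injective
modules. -/
def GwidLE (M : ModuleCat.{u} R) (n : ℕ) : Prop :=
  ∃ (G : ℕ → ModuleCat.{u} R) (d : ∀ i, G i →ₗ[R] G (i + 1)) (ε : M →ₗ[R] G 0),
    IsFiniteCoresolution R M n G d ε ∧ ∀ i, GorensteinWeakInjective R (G i)

/-- The Gorenstein weak injective dimension, as an element of `ℕ∞`. -/
def Gwid (M : ModuleCat.{u} R) : ℕ∞ :=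
  sInf {c : ℕ∞ | ∃ n : ℕ, c = n ∧ GwidLE R M n}

/-- `Gid_R M ≤ n`, via coresolutions by Gorenstein injective modules. -/
def GidLE (M : ModuleCat.{u} R) (n : ℕ) : Prop :=
  ∃ (G : ℕ → ModuleCat.{u} R) (d : ∀ i, G i →ₗ[R] G (i + 1)) (ε : M →ₗ[R] G 0),
    IsFiniteCoresolution R M n G d ε ∧ ∀ i, GorensteinInjective R (G i)

/-- The Gorenstein injective dimension, as an element of `ℕ∞`. -/
def Gid (M : ModuleCat.{u} R) : ℕ∞ :=
  sInf {c : ℕ∞ | ∃ n : ℕ, c = n ∧ GidLE R M n}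

/-- `id_R M ≤ n`, via coresolutions by injective modules. -/
def IdLE (M : ModuleCat.{u} R) (n : ℕ) : Prop :=
  ∃ (G : ℕ → ModuleCat.{u} R) (d : ∀ i, G i →ₗ[R] G (i + 1)) (ε : M →ₗ[R] G 0),
    IsFiniteCoresolution R M n G d ε ∧ ∀ i, Module.Injective R (G i)

/-- The injective dimension, as an element of `ℕ∞`. -/
def Idim (M : ModuleCat.{u} R) : ℕ∞ :=
  sInf {c : ℕ∞ | ∃ n : ℕ, c = n ∧ IdLE R M n}

/-- The data of an exact sequence `0 → P_n → ⋯ → P_0 → M → 0`. -/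
def IsFiniteResolution (M : ModuleCat.{u} R) (n : ℕ) (P : ℕ → ModuleCat.{u} R)
    (d : ∀ i, P (i + 1) →ₗ[R] P i) (ε : P 0 →ₗ[R] M) : Prop :=
  Function.Surjective ε ∧ Function.Exact (d 0) ε ∧
  (∀ i, Function.Exact (d (i + 1)) (d i)) ∧
  (∀ i, n < i → ∀ x : P i, x = 0)

/-- `pd_R M ≤ n`, via resolutions by projective modules. -/
def PdLE (M : ModuleCat.{u} R) (n : ℕ) : Prop :=
  ∃ (P : ℕ → ModuleCat.{u} R) (d : ∀ i, P (i + 1) →ₗ[R] P i) (ε : P 0 →ₗ[R] M),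
    IsFiniteResolution R M n P d ε ∧ ∀ i, Module.Projective R (P i)

end

variable (R : Type u) [Ring R]

/-- A short exact sequence `0 → L → M → N → 0` of `R`-modules. -/
def ShortExactSeq (L M N : ModuleCat.{u} R) (f : L →ₗ[R] M) (g : M →ₗ[R] N) : Prop :=
  Function.Injective f ∧ Function.Surjective g ∧ Function.Exact f g

/-- Exactness of `0 → Hom(C, X) → Hom(B, X) → Hom(A, X) → 0` induced by
`0 → A → B → C → 0`. -/
def HomContraExact (X : ModuleCat.{u} R) {A B C : ModuleCat.{u} R}
    (f : A →ₗ[R] B) (g : B →ₗ[R] C) : Prop :=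
  Function.Injective (fun h : C →ₗ[R] X => h.comp g) ∧
  Function.Exact (fun h : C →ₗ[R] X => h.comp g) (fun h : B →ₗ[R] X => h.comp f) ∧
  Function.Surjective (fun h : B →ₗ[R] X => h.comp f)

/-- A short exact sequence is `GWI`-copure exact if `Hom_R(-, X)` leaves it exact for
every Gorenstein weak injective module `X`. -/
def GWICopureExact {A B C : ModuleCat.{u} R} (f : A →ₗ[R] B) (g : B →ₗ[R] C) : Prop :=
  ShortExactSeq R A B C f g ∧
  ∀ X : ModuleCat.{u} R, GorensteinWeakInjective R X → HomContraExact R X f g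

/-- `M` is `GWI`-copure injective if `Hom_R(-, M)` is exact on every `GWI`-copure exact
sequence. -/
def GWICopureInjectiveMod (M : ModuleCat.{u} R) : Prop :=
  ∀ (A B C : ModuleCat.{u} R) (f : A →ₗ[R] B) (g : B →ₗ[R] C),
    GWICopureExact R f g → HomContraExact R M f g

/-- `φ : M → G` is a Gorenstein weak injective preenvelope of `M`. -/
def GWIPreenvelope (M G : ModuleCat.{u} R) (φ : M →ₗ[R] G) : Prop :=
  GorensteinWeakInjective R G ∧
  ∀ G' : ModuleCat.{u} R, GorensteinWeakInjective R G' →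
    ∀ f : M →ₗ[R] G', ∃ g : G →ₗ[R] G', g.comp φ = f

/-- A `WI`-pure Tate injective resolution of `M` : an injective resolution
`0 → M → E^0 → E^1 → ⋯`, a `WI`-pure exact complex `T` of injectives, and a chain map
`u : E → T` which is an isomorphism in all sufficiently large degrees. -/
def WIPureTateInjectiveResolution (M : ModuleCat.{u} R)
    (E : ℕ → ModuleCat.{u} R) (dE : ∀ n, E n →ₗ[R] E (n + 1)) (ε : M →ₗ[R] E 0)
    (T : ℤ → ModuleCat.{u} R) (dT : ∀ n : ℤ, T n →ₗ[R] T (n + 1))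
    (u : ∀ n : ℕ, E n →ₗ[R] T n) : Prop :=
  (∀ n, Module.Injective R (E n)) ∧ Function.Injective ε ∧
  Function.Exact ε (dE 0) ∧ (∀ n, Function.Exact (dE n) (dE (n + 1))) ∧
  IsTotallyAcyclicInjComplex R (WeakInjective R) T dT ∧
  (∀ n : ℕ, (dT n).comp (u n) = (u (n + 1)).comp (dE n)) ∧
  ∃ N : ℕ, ∀ n, N ≤ n → Function.Bijective (u n)

/-- Vanishing of the relative Tate cohomology `Êxt^i_GWI(N, M)` for all `i ∈ ℤ`,
computed from the `WI`-pure exact complex `T` : the complex `Hom_R(N, T)` is exact. -/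
def ExtHatVanishesAll (N : ModuleCat.{u} R) (T : ℤ → ModuleCat.{u} R)
    (dT : ∀ n : ℤ, T n →ₗ[R] T (n + 1)) : Prop :=
  ∀ n : ℤ, Function.Exact (fun g : N →ₗ[R] T n => (dT n).comp g)
    (fun g : N →ₗ[R] T (n + 1) => (dT (n + 1)).comp g)

section GorensteinDimension

variable {R}

open Abelian

/-- Vanishing of the `Ext` groups of the abelian category of `R`-modules. -/
abbrev ExtZero (W X : ModuleCat.{u} R) (i : ℕ) : Prop := Subsingleton (Ext.{u} W X i)

lemma ExtZero.of_injective (W : ModuleCat.{u} R) {E : ModuleCat.{u} R} (hE : Module.Injective R E)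
    {i : ℕ} (hi : 1 ≤ i) : ExtZero W E i := by
  obtain ⟨i, rfl⟩ := Nat.exists_eq_add_of_le' hi
  have : Injective E := (Module.injective_iff_injective_object R E).1 hE
  exact Ext.subsingleton_of_injective W E i

lemma weakInjective_of_injective {E : ModuleCat.{u} R} (hE : Module.Injective R E) :
    WeakInjective R E := by
  intro N _
  let P := projectiveResolution N
  refine ModuleCat.subsingleton_of_isZero (Limits.IsZero.of_iso ?_ (P.isoExt (R := ℤ) 1 E))
  rw [← HomologicalComplex.exactAt_iff_isZero_homology,
    HomologicalComplex.exactAt_iff' _ 0 1 2 (by simp) (by simp),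
    ShortComplex.moduleCat_exact_iff]
  have hP := P.complex_exactAt_succ 0
  rw [HomologicalComplex.exactAt_iff' _ 2 1 0 (by simp) (by simp)] at hP
  have : Injective E := (Module.injective_iff_injective_object R E).1 hE
  intro x hx
  exact ⟨hP.descToInjective x hx, hP.comp_descToInjective x hx⟩

lemma injective_of_subsingleton (X : ModuleCat.{u} R) [Subsingleton X] : Module.Injective R X :=
  ⟨fun _ _ _ _ _ _ _ _ _ => ⟨0, fun _ => Subsingleton.elim _ _⟩⟩

/-- An injective module receiving `X`, with its quotient. -/
lemma exists_shortExactSeq_injective (X : ModuleCat.{u} R) :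
    ∃ (I Y : ModuleCat.{u} R) (f : X →ₗ[R] I) (g : I →ₗ[R] Y),
      Module.Injective R I ∧ ShortExactSeq R X I Y f g := by
  let I := Injective.under X
  let f : X →ₗ[R] I := (Injective.ι X).hom
  have hI : Injective I := Injective.injective_under X
  refine ⟨I, ModuleCat.of R (I ⧸ LinearMap.range f), f, (LinearMap.range f).mkQ,
    (Module.injective_iff_injective_object R I).2 hI,
    (ModuleCat.mono_iff_injective (Injective.ι X)).1 inferInstance,
    Submodule.mkQ_surjective _, LinearMap.exact_map_mkQ_range f⟩

namespace ShortExactSeq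

variable {A B C W : ModuleCat.{u} R} {f : A →ₗ[R] B} {g : B →ₗ[R] C}

/-- The short complex in the category of modules. -/
abbrev toShortComplex (h : ShortExactSeq R A B C f g) : ShortComplex (ModuleCat.{u} R) :=
  ShortComplex.mk (X₁ := A) (X₂ := B) (X₃ := C) (ConcreteCategory.ofHom f)
    (ConcreteCategory.ofHom g) (ModuleCat.hom_ext h.2.2.linearMap_comp_eq_zero)

lemma shortExact (h : ShortExactSeq R A B C f g) : h.toShortComplex.ShortExact :=
  ModuleCat.shortComplex_shortExact _ h.2.2 h.1 h.2.1

lemma comp_eq_zero (h : ShortExactSeq R A B C f g) : g ∘ₗ f = 0 :=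
  h.2.2.linearMap_comp_eq_zero

lemma extZero_middle (h : ShortExactSeq R A B C f g) {i : ℕ} (hA : ExtZero W A i)
    (hC : ExtZero W C i) : ExtZero W B i := by
  refine subsingleton_of_forall_eq 0 fun x => ?_
  obtain ⟨y, rfl⟩ := Ext.covariant_sequence_exact₂ W h.shortExact x
    (hC.elim _ _)
  obtain rfl : y = 0 := hA.elim _ _
  exact Ext.zero_comp ..

lemma extZero_right (h : ShortExactSeq R A B C f g) {i : ℕ} (hB : ExtZero W B i)
    (hA : ExtZero W A (i + 1)) : ExtZero W C i := by
  refine subsingleton_of_forall_eq 0 fun x => ?_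
  obtain ⟨y, rfl⟩ := Ext.covariant_sequence_exact₃ W h.shortExact x rfl (hA.elim _ _)
  obtain rfl : y = 0 := hB.elim _ _
  exact Ext.zero_comp ..

lemma extZero_left (h : ShortExactSeq R A B C f g) {i : ℕ} (hC : ExtZero W C i)
    (hB : ExtZero W B (i + 1)) : ExtZero W A (i + 1) := by
  refine subsingleton_of_forall_eq 0 fun x => ?_
  obtain ⟨y, rfl⟩ := Ext.covariant_sequence_exact₁ W h.shortExact x (hB.elim _ _) rfl
  obtain rfl : y = 0 := hC.elim _ _
  exact Ext.zero_comp ..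

lemma extZero_left_of_lift (h : ShortExactSeq R A B C f g) (hB : ExtZero W B 1)
    (hl : ∀ k : W →ₗ[R] C, ∃ l : W →ₗ[R] B, g ∘ₗ l = k) : ExtZero W A 1 := by
  refine subsingleton_of_forall_eq 0 fun x => ?_
  obtain ⟨y, rfl⟩ := Ext.covariant_sequence_exact₁ W h.shortExact x (hB.elim _ _) (zero_add 1)
  obtain ⟨k, rfl⟩ := (Ext.mk₀_bijective _ _).2 y
  obtain ⟨l, hl⟩ := hl k.hom
  let l' : W ⟶ h.toShortComplex.X₂ := ConcreteCategory.ofHom (X := W) (Y := B) l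
  obtain rfl : l' ≫ h.toShortComplex.g = k := ModuleCat.hom_ext hl
  rw [← Ext.mk₀_comp_mk₀, Ext.comp_assoc_of_second_deg_zero, h.shortExact.comp_extClass,
    Ext.comp_zero]

lemma extZero_source_left (h : ShortExactSeq R A B C f g) {i : ℕ} (hB : ExtZero B W i)
    (hC : ExtZero C W (i + 1)) : ExtZero A W i := by
  refine subsingleton_of_forall_eq 0 fun x => ?_
  obtain ⟨y, rfl⟩ := Ext.contravariant_sequence_exact₁ h.shortExact W x (add_comm 1 i)
    (hC.elim _ _)
  obtain rfl : y = 0 := hB.elim _ _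
  exact Ext.comp_zero ..

lemma exists_lift (h : ShortExactSeq R A B C f g) (hA : ExtZero W A 1) (k : W →ₗ[R] C) :
    ∃ l : W →ₗ[R] B, g ∘ₗ l = k := by
  obtain ⟨y, hy⟩ := Ext.covariant_sequence_exact₃ W h.shortExact (Ext.mk₀ (ModuleCat.ofHom k))
    (zero_add 1) (hA.elim _ _)
  obtain ⟨l, rfl⟩ := (Ext.mk₀_bijective _ _).2 y
  rw [Ext.mk₀_comp_mk₀] at hy
  exact ⟨l.hom, congrArg ModuleCat.Hom.hom ((Ext.mk₀_bijective _ _).1 hy)⟩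

lemma exists_factor (h : ShortExactSeq R A B C f g) (k : W →ₗ[R] B) (hk : g ∘ₗ k = 0) :
    ∃ l : W →ₗ[R] A, f ∘ₗ l = k := by
  let e := LinearEquiv.ofInjective f h.1
  refine ⟨e.symm.toLinearMap ∘ₗ k.codRestrict (LinearMap.range f)
    fun x => (h.2.2 _).1 (LinearMap.congr_fun hk x), ?_⟩
  ext x
  exact LinearEquiv.ofInjective_symm_apply f (h := h.1) _

/-- A split short exact sequence, read backwards. -/
lemma exists_reverse (h : ShortExactSeq R A B C f g) (hCA : ExtZero C A 1) :
    ∃ (f' : C →ₗ[R] B) (g' : B →ₗ[R] A), g' ∘ₗ f = LinearMap.id ∧ ShortExactSeq R C B A f' g' := by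
  obtain ⟨s, hs⟩ := h.exists_lift hCA LinearMap.id
  have hs' (c : C) : g (s c) = c := LinearMap.congr_fun hs c
  obtain ⟨r, hr⟩ := h.exists_factor (LinearMap.id - s ∘ₗ g) (by
    ext x; simp [hs'])
  have hr' (b : B) : f (r b) = b - s (g b) := LinearMap.congr_fun hr b
  have hgf (a : A) : g (f a) = 0 := LinearMap.congr_fun h.comp_eq_zero a
  have hrf (a : A) : r (f a) = a := h.1 (by simp [hr', hgf])
  refine ⟨s, r, LinearMap.ext hrf, Function.LeftInverse.injective hs',
    Function.LeftInverse.surjective hrf, fun b => ⟨fun hb => ⟨g b, ?_⟩, ?_⟩⟩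
  · have := hr' b
    rw [hb, map_zero] at this
    exact (sub_eq_zero.1 this.symm).symm
  · rintro ⟨c, rfl⟩
    exact h.1 (by simp [hr', hs'])

lemma injective_left (h : ShortExactSeq R A B C f g) (hB : Module.Injective R B)
    (hCA : ExtZero C A 1) : Module.Injective R A := by
  obtain ⟨_, r, hr, -⟩ := h.exists_reverse hCA
  refine ⟨fun X Y _ _ _ _ i hi k => ?_⟩
  obtain ⟨l, hl⟩ := hB.out i hi (f ∘ₗ k)
  exact ⟨r ∘ₗ l, fun x => by
    simpa [hl] using LinearMap.congr_fun hr (k x)⟩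

/-- The pullback of two short exact sequences with the same right end. -/
lemma pullback {M G K Q : ModuleCat.{u} R} {i : M →ₗ[R] G} {p : G →ₗ[R] C} {j : K →ₗ[R] Q}
    {q : Q →ₗ[R] C} (h₁ : ShortExactSeq R M G C i p) (h₂ : ShortExactSeq R K Q C j q) :
    ∃ (X : ModuleCat.{u} R) (a : M →ₗ[R] X) (b : X →ₗ[R] Q) (c : K →ₗ[R] X) (d : X →ₗ[R] G),
      ShortExactSeq R M X Q a b ∧ ShortExactSeq R K X G c d := by
  let S : Submodule R (G × Q) :=
    LinearMap.eqLocus (p ∘ₗ LinearMap.fst R G Q) (q ∘ₗ LinearMap.snd R G Q)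
  have hpi (x : M) : p (i x) = 0 := LinearMap.congr_fun h₁.comp_eq_zero x
  have hqj (x : K) : q (j x) = 0 := LinearMap.congr_fun h₂.comp_eq_zero x
  have hS (x : S) : p x.1.1 = q x.1.2 := x.2
  refine ⟨ModuleCat.of R S,
    (LinearMap.inl R G Q ∘ₗ i).codRestrict S fun x => ?_, LinearMap.snd R G Q ∘ₗ S.subtype,
    (LinearMap.inr R G Q ∘ₗ j).codRestrict S fun x => ?_, LinearMap.fst R G Q ∘ₗ S.subtype,
    ⟨?_, ?_, ?_⟩, ⟨?_, ?_, ?_⟩⟩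
  · simp [S, hpi]
  · simp [S, hqj]
  · exact fun x y hxy => h₁.1 (congrArg (fun t => t.1.1) hxy)
  · intro y
    obtain ⟨z, hz⟩ := h₁.2.1 (q y)
    exact ⟨⟨(z, y), hz⟩, rfl⟩
  · rintro ⟨⟨x, y⟩, hxy⟩
    refine ⟨fun (hy : y = 0) => ?_, ?_⟩
    · subst hy
      obtain ⟨z, rfl⟩ := (h₁.2.2 x).1 ((hS ⟨_, hxy⟩).trans (map_zero q))
      exact ⟨z, rfl⟩
    · rintro ⟨z, hz⟩
      exact (congrArg (fun t => t.1.2) hz).symm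
  · exact fun x y hxy => h₂.1 (congrArg (fun t => t.1.2) hxy)
  · intro y
    obtain ⟨z, hz⟩ := h₂.2.1 (p y)
    exact ⟨⟨(y, z), hz.symm⟩, rfl⟩
  · rintro ⟨⟨x, y⟩, hxy⟩
    refine ⟨fun (hy : x = 0) => ?_, ?_⟩
    · subst hy
      obtain ⟨z, rfl⟩ := (h₂.2.2 y).1 ((hS ⟨_, hxy⟩).symm.trans (map_zero p))
      exact ⟨z, rfl⟩
    · rintro ⟨z, hz⟩
      exact (congrArg (fun t => t.1.1) hz).symm

/-- The preimage in `I` of the submodule `C` of a quotient `H` of `I`. -/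
lemma comap {K I H L : ModuleCat.{u} R} {j : K →ₗ[R] I} {q : I →ₗ[R] H} {φ : C →ₗ[R] H}
    {ψ : H →ₗ[R] L} (h₁ : ShortExactSeq R K I H j q) (h₂ : ShortExactSeq R C H L φ ψ) :
    ∃ (Q : ModuleCat.{u} R) (a : K →ₗ[R] Q) (b : Q →ₗ[R] C) (c : Q →ₗ[R] I) (d : I →ₗ[R] L),
      ShortExactSeq R K Q C a b ∧ ShortExactSeq R Q I L c d := by
  let S : Submodule R I := LinearMap.ker (ψ ∘ₗ q)
  obtain ⟨b, hb⟩ := h₂.exists_factor (W := ModuleCat.of R S) (q ∘ₗ S.subtype)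
    (LinearMap.ext fun x => x.2)
  have hb' (x : S) : φ (b x) = q x := LinearMap.congr_fun hb x
  have hqj (x : K) : q (j x) = 0 := LinearMap.congr_fun h₁.comp_eq_zero x
  refine ⟨ModuleCat.of R S, j.codRestrict S fun x => ?_, b, S.subtype, ψ ∘ₗ q,
    ⟨?_, ?_, ?_⟩, Subtype.val_injective, h₂.2.1.comp h₁.2.1,
      LinearMap.exact_subtype_ker_map _⟩
  · simp [S, hqj]
  · exact fun x y hxy => h₁.1 (congrArg (fun t => t.1) hxy)
  · intro y
    obtain ⟨z, hz⟩ := h₁.2.1 (φ y)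
    have hzS : z ∈ S := by
      simpa [S, hz] using LinearMap.congr_fun h₂.comp_eq_zero y
    exact ⟨⟨z, hzS⟩, h₂.1 (by rw [hb', hz])⟩
  · intro x
    rw [← map_eq_zero_iff φ h₂.1, hb', h₁.2.2]
    exact ⟨fun ⟨y, hy⟩ => ⟨y, Subtype.ext hy⟩, fun ⟨y, hy⟩ => ⟨y, (congrArg (fun t => t.1) hy)⟩⟩

/-- The horseshoe lemma, for one step of left resolutions. -/
lemma horseshoe {A' C' I J : ModuleCat.{u} R} {a : A' →ₗ[R] I} {α : I →ₗ[R] A} {c : C' →ₗ[R] J}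
    {γ : J →ₗ[R] C} (h : ShortExactSeq R A B C f g) (hA : ShortExactSeq R A' I A a α)
    (hC : ShortExactSeq R C' J C c γ) (hJ : ExtZero J A 1) :
    ∃ (B' : ModuleCat.{u} R) (f' : A' →ₗ[R] B') (g' : B' →ₗ[R] C')
      (b : B' →ₗ[R] I × J) (β : I × J →ₗ[R] B),
      ShortExactSeq R A' B' C' f' g' ∧
      ShortExactSeq R B' (ModuleCat.of R (I × J)) B b β := by
  obtain ⟨l, hl⟩ := h.exists_lift hJ γ
  have hl' (y : J) : g (l y) = γ y := LinearMap.congr_fun hl y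
  have hgf (a : A) : g (f a) = 0 := LinearMap.congr_fun h.comp_eq_zero a
  have hαa (x : A') : α (a x) = 0 := LinearMap.congr_fun hA.comp_eq_zero x
  have hγc (x : C') : γ (c x) = 0 := LinearMap.congr_fun hC.comp_eq_zero x
  let β : I × J →ₗ[R] B := LinearMap.coprod (f ∘ₗ α) l
  let S := LinearMap.ker β
  have hβ (x : I) (y : J) : β (x, y) = f (α x) + l y := by simp [β]
  obtain ⟨g', hg'⟩ := hC.exists_factor (W := ModuleCat.of R S)
    (LinearMap.snd R I J ∘ₗ S.subtype) (by
      ext ⟨⟨x, y⟩, hxy⟩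
      have := congrArg g ((hβ x y).symm.trans hxy)
      simpa [hgf, hl'] using this)
  have hg (x : S) : c (g' x) = x.1.2 := LinearMap.congr_fun hg' x
  refine ⟨ModuleCat.of R S, (LinearMap.inl R I J ∘ₗ a).codRestrict S fun x => ?_, g',
    S.subtype, β, ⟨?_, ?_, ?_⟩, Subtype.val_injective, ?_, LinearMap.exact_subtype_ker_map _⟩
  · simp [S, β, hαa]
  · exact fun x y hxy => hA.1 (congrArg (fun t => t.1.1) hxy)
  · intro z
    obtain ⟨t, ht⟩ := (h.2.2 (l (c z))).1 (by rw [hl', hγc])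
    obtain ⟨x, rfl⟩ := hA.2.1 t
    exact ⟨⟨(-x, c z), by simp [S, hβ, ht]⟩, hC.1 (hg _)⟩
  · rintro ⟨⟨x, y⟩, hxy⟩
    rw [← map_eq_zero_iff c hC.1, hg]
    refine ⟨fun (hy : y = 0) => ?_, ?_⟩
    · subst hy
      obtain ⟨z, rfl⟩ := (hA.2.2 x).1 (h.1 (by simpa [S, hβ] using hxy))
      exact ⟨z, rfl⟩
    · rintro ⟨z, hz⟩
      exact (congrArg (fun t => t.1.2) hz).symm
  · intro z
    obtain ⟨y, hy⟩ := hC.2.1 (g z)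
    obtain ⟨t, ht⟩ := (h.2.2 (z - l y)).1 (by rw [map_sub, hl', hy, sub_self])
    obtain ⟨x, rfl⟩ := hA.2.1 t
    exact ⟨(x, y), by rw [hβ, ht, sub_add_cancel]⟩

end ShortExactSeq

lemma shortExactSeq_zero_id (X : ModuleCat.{u} R) :
    ShortExactSeq R (ModuleCat.of R PUnit) X X 0 LinearMap.id :=
  ⟨Function.injective_of_subsingleton _, Function.surjective_id,
    fun x => ⟨fun hx => ⟨0, hx.symm⟩, by rintro ⟨y, rfl⟩; rfl⟩⟩

lemma shortExactSeq_id_zero (X : ModuleCat.{u} R) :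
    ShortExactSeq R X X (ModuleCat.of R PUnit) LinearMap.id 0 :=
  ⟨Function.injective_id, Function.surjective_to_subsingleton _,
    fun x => ⟨fun _ => ⟨x, rfl⟩, fun _ => rfl⟩⟩

lemma injective_prod {I J : ModuleCat.{u} R} (hI : Module.Injective R I)
    (hJ : Module.Injective R J) : Module.Injective R (ModuleCat.of R (I × J)) := by
  refine ⟨fun X Y _ _ _ _ i hi k => ?_⟩
  obtain ⟨a, ha⟩ := hI.out i hi (LinearMap.fst R I J ∘ₗ k)
  obtain ⟨b, hb⟩ := hJ.out i hi (LinearMap.snd R I J ∘ₗ k)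
  exact ⟨a.prod b, fun x => Prod.ext (ha x) (hb x)⟩

/-- Vanishing of `Ext^i(W, X)` for all `i ≥ 1` and all `W` in the test class. -/
def ExtAcyclic (𝒯 : ModuleCat.{u} R → Prop) (X : ModuleCat.{u} R) : Prop :=
  ∀ W, 𝒯 W → ∀ i, 1 ≤ i → ExtZero W X i

/-- Coinductive form of relative Gorenstein injectivity: `M` is `Ext`-acyclic, and is the quotient
of an injective module by a module with the same property. -/
def AcyclicallyResolved (𝒯 : ModuleCat.{u} R → Prop) (M : ModuleCat.{u} R) : Prop :=
  ∃ P : ModuleCat.{u} R → Prop, P M ∧ ∀ X, P X → ExtAcyclic 𝒯 X ∧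
    ∃ (X' I : ModuleCat.{u} R) (f : X' →ₗ[R] I) (g : I →ₗ[R] X),
      Module.Injective R I ∧ ShortExactSeq R X' I X f g ∧ P X'

namespace AcyclicallyResolved

variable {𝒯 : ModuleCat.{u} R → Prop} {A B C M : ModuleCat.{u} R} {f : A →ₗ[R] B} {g : B →ₗ[R] C}

lemma extAcyclic (h : AcyclicallyResolved 𝒯 M) : ExtAcyclic 𝒯 M := by
  obtain ⟨P, hM, hP⟩ := h
  exact (hP M hM).1

lemma exists_syzygy (h : AcyclicallyResolved 𝒯 M) :
    ∃ (X I : ModuleCat.{u} R) (f : X →ₗ[R] I) (g : I →ₗ[R] M),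
      Module.Injective R I ∧ ShortExactSeq R X I M f g ∧ AcyclicallyResolved 𝒯 X := by
  obtain ⟨P, hM, hP⟩ := h
  obtain ⟨X, I, f, g, hI, hS, hX⟩ := (hP M hM).2
  exact ⟨X, I, f, g, hI, hS, P, hX, hP⟩

lemma of_syzygy (hM : ExtAcyclic 𝒯 C) (hB : Module.Injective R B)
    (h : ShortExactSeq R A B C f g) (hA : AcyclicallyResolved 𝒯 A) : AcyclicallyResolved 𝒯 C := by
  refine ⟨fun X => X = C ∨ AcyclicallyResolved 𝒯 X, Or.inl rfl, ?_⟩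
  rintro X (rfl | hX)
  · exact ⟨hM, A, B, f, g, hB, h, Or.inr hA⟩
  · obtain ⟨Y, I, f, g, hI, hS, hY⟩ := hX.exists_syzygy
    exact ⟨hX.extAcyclic, Y, I, f, g, hI, hS, Or.inr hY⟩

lemma of_injective (hM : Module.Injective R M) : AcyclicallyResolved 𝒯 M :=
  ⟨fun X => Module.Injective R X, hM, fun X hX =>
    ⟨fun W _ _ hi => ExtZero.of_injective W hX hi, _, X, _, _, hX, shortExactSeq_zero_id X,
      injective_of_subsingleton (ModuleCat.of R PUnit)⟩⟩

lemma extension (h𝒯 : ∀ E : ModuleCat.{u} R, Module.Injective R E → 𝒯 E)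
    (h : ShortExactSeq R A B C f g) (hA : AcyclicallyResolved 𝒯 A) (hC : AcyclicallyResolved 𝒯 C) :
    AcyclicallyResolved 𝒯 B := by
  refine ⟨fun Y => ∃ (X Z : ModuleCat.{u} R) (f : X →ₗ[R] Y) (g : Y →ₗ[R] Z),
    ShortExactSeq R X Y Z f g ∧ AcyclicallyResolved 𝒯 X ∧ AcyclicallyResolved 𝒯 Z,
    ⟨A, C, f, g, h, hA, hC⟩, ?_⟩
  rintro Y ⟨X, Z, f, g, h, hX, hZ⟩
  refine ⟨fun W hW i hi => h.extZero_middle (hX.extAcyclic W hW i hi)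
    (hZ.extAcyclic W hW i hi), ?_⟩
  obtain ⟨X', I, _, _, hI, hSX, hX'⟩ := hX.exists_syzygy
  obtain ⟨Z', J, _, _, hJ, hSZ, hZ'⟩ := hZ.exists_syzygy
  obtain ⟨Y', f', g', b, β, h₁, h₂⟩ := h.horseshoe hSX hSZ (hX.extAcyclic J (h𝒯 J hJ) 1 le_rfl)
  exact ⟨Y', _, b, β, injective_prod hI hJ, h₂, X', Z', f', g', h₁, hX', hZ'⟩

lemma cokernel (h𝒯 : ∀ E : ModuleCat.{u} R, Module.Injective R E → 𝒯 E)
    (h : ShortExactSeq R A B C f g) (hA : AcyclicallyResolved 𝒯 A) (hB : AcyclicallyResolved 𝒯 B) :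
    AcyclicallyResolved 𝒯 C := by
  obtain ⟨B', I, b, β, hI, hS, hB'⟩ := hB.exists_syzygy
  obtain ⟨K, _, _, _, _, h₁, h₂⟩ := hS.comap h
  exact of_syzygy (fun W hW i hi => h.extZero_right (hB.extAcyclic W hW i hi)
    (hA.extAcyclic W hW (i + 1) (by lia))) hI h₂ (extension h𝒯 h₁ hB' hA)

/-- The syzygies and cosyzygies of an acyclically resolved module, as a doubly infinite chain. -/
lemma exists_chain (h : AcyclicallyResolved 𝒯 M) :
    ∃ K : ℤ → ModuleCat.{u} R, K 1 = M ∧ (∀ n, ExtAcyclic 𝒯 (K n)) ∧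
      ∀ n, ∃ (I : ModuleCat.{u} R) (f : K n →ₗ[R] I) (g : I →ₗ[R] K (n + 1)),
        Module.Injective R I ∧ ShortExactSeq R (K n) I (K (n + 1)) f g := by
  choose I c fI gI hI hIc using exists_shortExactSeq_injective (R := R)
  let a : ℕ → ModuleCat.{u} R := fun n => n.rec M fun _ => c
  have ha (n : ℕ) : ExtAcyclic 𝒯 (a n) := by
    induction n with
    | zero => exact h.extAcyclic
    | succ n ih =>
      exact fun W hW i hi => (hIc (a n)).extZero_right (ExtZero.of_injective W (hI _) hi)
        (ih W hW (i + 1) (by lia))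
  choose s J fJ gJ hJ hs hs' using
    fun X : {X : ModuleCat.{u} R // AcyclicallyResolved 𝒯 X} => X.2.exists_syzygy
  let b : ℕ → {X : ModuleCat.{u} R // AcyclicallyResolved 𝒯 X} :=
    fun n => n.rec ⟨M, h⟩ fun _ X => ⟨s X, hs' X⟩
  let K : ℤ → ModuleCat.{u} R
    | .ofNat 0 => (b 1).1
    | .ofNat (k + 1) => a k
    | .negSucc k => (b (k + 2)).1
  refine ⟨K, rfl, ?_, ?_⟩
  · rintro ((_ | k) | k)
    · exact (b 1).2.extAcyclic
    · exact ha k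
    · exact (b (k + 2)).2.extAcyclic
  · rintro ((_ | k) | (_ | k))
    · exact ⟨_, _, _, hJ (b 0), hs (b 0)⟩
    · exact ⟨_, _, _, hI (a k), hIc (a k)⟩
    · exact ⟨_, _, _, hJ (b 1), hs (b 1)⟩
    · exact ⟨_, _, _, hJ (b (k + 2)), hs (b (k + 2))⟩

lemma gorensteinRelInjective (h : AcyclicallyResolved 𝒯 M) : GorensteinRelInjective R 𝒯 M := by
  obtain ⟨K, rfl, hK, hS⟩ := h.exists_chain
  choose I f g hI hS using hS
  have hfg (n : ℤ) (x : K n) : g n (f n x) = 0 := LinearMap.congr_fun (hS n).comp_eq_zero x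
  have hd (n : ℤ) : Function.Exact (f (n + 1) ∘ₗ g n) (g (n + 1)) := by
    intro x
    rw [(hS (n + 1)).2.2]
    refine ⟨?_, ?_⟩
    · rintro ⟨y, rfl⟩
      obtain ⟨z, rfl⟩ := (hS n).2.1 y
      exact ⟨z, rfl⟩
    · rintro ⟨z, rfl⟩
      exact ⟨g n z, rfl⟩
  refine ⟨I, fun n => f (n + 1) ∘ₗ g n, g 0, ⟨hI, fun n x => ?_, fun W hW n k => ?_⟩,
    (hS 0).2.1, hd (-1)⟩
  · rw [← hd n x]
    exact map_eq_zero_iff _ (hS _).1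
  · refine ⟨fun hk => ?_, ?_⟩
    · obtain ⟨l, rfl⟩ := (hS (n + 1)).exists_factor k (LinearMap.ext fun x =>
        (hS (n + 1 + 1)).1 ((LinearMap.congr_fun hk x).trans (map_zero _).symm))
      obtain ⟨m, rfl⟩ := (hS n).exists_lift (hK n W hW 1 le_rfl) l
      exact ⟨m, rfl⟩
    · rintro ⟨l, rfl⟩
      ext x
      simp [hfg]

end AcyclicallyResolved

lemma IsTotallyAcyclicInjComplex.exists_shortExactSeq {𝒯 : ModuleCat.{u} R → Prop}
    {I : ℤ → ModuleCat.{u} R} {d : ∀ n, I n →ₗ[R] I (n + 1)}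
    (h : IsTotallyAcyclicInjComplex R 𝒯 I d) (n : ℤ) {X Y : ModuleCat.{u} R} {ι : X →ₗ[R] I n}
    (hι : Function.Injective ι) (hX : Function.Exact ι (d n))
    {κ : Y →ₗ[R] I (n + 1)} (hκ : Function.Injective κ) (hY : Function.Exact κ (d (n + 1))) :
    ∃ g : I n →ₗ[R] Y, κ ∘ₗ g = d n ∧ ShortExactSeq R X (I n) Y ι g := by
  let e := LinearEquiv.ofInjective κ hκ
  have hd (x : I n) : d n x ∈ LinearMap.range κ :=
    (hY _).1 ((h.2.1 n _).2 ⟨x, rfl⟩)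
  let g : I n →ₗ[R] Y := e.symm.toLinearMap ∘ₗ (d n).codRestrict (LinearMap.range κ) hd
  have hg (x : I n) : κ (g x) = d n x := LinearEquiv.ofInjective_symm_apply κ (h := hκ) _
  refine ⟨g, LinearMap.ext hg, hι, fun y => ?_, fun x => ?_⟩
  · obtain ⟨x, hx⟩ := (h.2.1 n (κ y)).1 ((hY _).2 ⟨y, rfl⟩)
    exact ⟨x, hκ (by rw [hg, hx])⟩
  · rw [← map_eq_zero_iff κ hκ, hg]
    exact hX x

lemma IsTotallyAcyclicInjComplex.extAcyclic {𝒯 : ModuleCat.{u} R → Prop}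
    {I : ℤ → ModuleCat.{u} R} {d : ∀ n, I n →ₗ[R] I (n + 1)}
    (h : IsTotallyAcyclicInjComplex R 𝒯 I d) {n : ℤ} {X : ModuleCat.{u} R} {ι : X →ₗ[R] I n}
    (hι : Function.Injective ι) (hX : Function.Exact ι (d n)) : ExtAcyclic 𝒯 X := by
  intro W hW i hi
  induction i, hi using Nat.le_induction generalizing n X with
  | base =>
    obtain ⟨g, hg, hS⟩ := h.exists_shortExactSeq n hι hX
      (Y := ModuleCat.of R (LinearMap.ker (d (n + 1)))) Subtype.val_injective
      (LinearMap.exact_subtype_ker_map _)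
    refine hS.extZero_left_of_lift (ExtZero.of_injective W (h.1 n) le_rfl) fun k => ?_
    obtain ⟨l, hl⟩ := (h.2.2 W hW n (Submodule.subtype _ ∘ₗ k)).1
      (LinearMap.ext fun x => (k x).2)
    refine ⟨l, LinearMap.ext fun x => Subtype.ext ?_⟩
    exact (LinearMap.congr_fun hg (l x)).trans (LinearMap.congr_fun hl x)
  | succ i hi ih =>
    obtain ⟨g, hg, hS⟩ := h.exists_shortExactSeq n hι hX
      (Y := ModuleCat.of R (LinearMap.ker (d (n + 1)))) Subtype.val_injective
      (LinearMap.exact_subtype_ker_map _)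
    exact hS.extZero_left (ih Subtype.val_injective (LinearMap.exact_subtype_ker_map _))
      (ExtZero.of_injective W (h.1 n) (by lia))

lemma GorensteinRelInjective.acyclicallyResolved {𝒯 : ModuleCat.{u} R → Prop}
    {M : ModuleCat.{u} R} (h : GorensteinRelInjective R 𝒯 M) : AcyclicallyResolved 𝒯 M := by
  obtain ⟨I, d, π, h, hπ, hdπ⟩ := h
  have hd : Function.Exact (d (-1)) (d 0) := h.2.1 (-1)
  have hker (x : I 0) : π x = 0 ↔ d 0 x = 0 := (hdπ x).trans (hd x).symm
  let e := π.quotKerEquivOfSurjective hπ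
  let ι : M →ₗ[R] I (0 + 1) :=
    (LinearMap.ker π).liftQ (d 0) (fun x hx => (hker x).1 hx) ∘ₗ e.symm.toLinearMap
  have hι (x : I 0) : ι (π x) = d 0 x := by
    have : e.symm (π x) = Submodule.Quotient.mk x := e.symm_apply_eq.2 rfl
    simp only [ι, LinearMap.comp_apply, LinearEquiv.coe_coe, this]
    rfl
  refine ⟨fun X => ∃ (I : ℤ → ModuleCat.{u} R) (d : ∀ n, I n →ₗ[R] I (n + 1)) (n : ℤ)
    (ι : X →ₗ[R] I n), IsTotallyAcyclicInjComplex R 𝒯 I d ∧ Function.Injective ι ∧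
      Function.Exact ι (d n), ⟨I, d, 0 + 1, ι, h, ?_, fun x => ?_⟩, ?_⟩
  · rw [injective_iff_map_eq_zero]
    intro y hy
    obtain ⟨x, rfl⟩ := hπ y
    rw [hι] at hy
    exact (hker x).2 hy
  · rw [h.2.1 0 x]
    refine ⟨?_, ?_⟩
    · rintro ⟨y, rfl⟩
      exact ⟨π y, hι y⟩
    · rintro ⟨y, rfl⟩
      obtain ⟨x, rfl⟩ := hπ y
      exact ⟨x, (hι x).symm⟩
  · rintro X ⟨I, d, n, ι, h, hι, hX⟩
    obtain ⟨n, rfl⟩ : ∃ m, n = m + 1 := ⟨n - 1, by ring⟩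
    obtain ⟨g, -, hS⟩ := h.exists_shortExactSeq n
      (X := ModuleCat.of R (LinearMap.ker (d n))) Subtype.val_injective
      (LinearMap.exact_subtype_ker_map _) hι hX
    exact ⟨h.extAcyclic hι hX, _, I n, _, g, h.1 n, hS, I, d, n, _, h, Subtype.val_injective,
      LinearMap.exact_subtype_ker_map _⟩

lemma gorensteinRelInjective_iff {𝒯 : ModuleCat.{u} R → Prop} {M : ModuleCat.{u} R} :
    GorensteinRelInjective R 𝒯 M ↔ AcyclicallyResolved 𝒯 M :=
  ⟨fun h => h.acyclicallyResolved, fun h => h.gorensteinRelInjective⟩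

lemma GorensteinRelInjective.of_linearEquiv {𝒯 : ModuleCat.{u} R → Prop} {M N : ModuleCat.{u} R}
    (e : M ≃ₗ[R] N) (h : GorensteinRelInjective R 𝒯 M) : GorensteinRelInjective R 𝒯 N := by
  obtain ⟨I, d, π, h, hπ, hdπ⟩ := h
  refine ⟨I, d, e.toLinearMap ∘ₗ π, h, e.surjective.comp hπ, fun x => ?_⟩
  rw [← hdπ x]
  exact e.map_eq_zero_iff

/-- `M` has a coresolution of length at most `n` by modules of the class `𝒞`. -/
def CoresolutionLE (𝒞 : ModuleCat.{u} R → Prop) : ℕ → ModuleCat.{u} R → Prop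
  | 0, M => 𝒞 M
  | n + 1, M => ∃ (G Y : ModuleCat.{u} R) (f : M →ₗ[R] G) (g : G →ₗ[R] Y),
      𝒞 G ∧ ShortExactSeq R M G Y f g ∧ CoresolutionLE 𝒞 n Y

namespace CoresolutionLE

variable {𝒞 𝒟 : ModuleCat.{u} R → Prop} {M N : ModuleCat.{u} R} {m n : ℕ}

lemma mono_class (h : ∀ X, 𝒞 X → 𝒟 X) (hM : CoresolutionLE 𝒞 n M) : CoresolutionLE 𝒟 n M := by
  induction n generalizing M with
  | zero => exact h M hM
  | succ n ih =>
    obtain ⟨G, Y, f, g, hG, hS, hY⟩ := hM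
    exact ⟨G, Y, f, g, h G hG, hS, ih hY⟩

lemma succ (h₀ : ∀ X : ModuleCat.{u} R, Subsingleton X → 𝒞 X) (hM : CoresolutionLE 𝒞 n M) :
    CoresolutionLE 𝒞 (n + 1) M := by
  induction n generalizing M with
  | zero => exact ⟨M, _, _, _, hM, shortExactSeq_id_zero M,
      h₀ (ModuleCat.of R PUnit) inferInstance⟩
  | succ n ih =>
    obtain ⟨G, Y, f, g, hG, hS, hY⟩ := hM
    exact ⟨G, Y, f, g, hG, hS, ih hY⟩

lemma of_isFiniteCoresolution (he : ∀ X Y : ModuleCat.{u} R, (X ≃ₗ[R] Y) → 𝒞 X → 𝒞 Y)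
    {G : ℕ → ModuleCat.{u} R} {d : ∀ i, G i →ₗ[R] G (i + 1)} {ε : M →ₗ[R] G 0}
    (h : IsFiniteCoresolution R M n G d ε) (hG : ∀ i, 𝒞 (G i)) : CoresolutionLE 𝒞 n M := by
  induction n generalizing M G with
  | zero =>
    have hε : Function.Surjective ε := fun x => (h.2.1 x).1 (h.2.2.2 1 one_pos _)
    exact he _ _ (LinearEquiv.ofBijective ε ⟨h.1, hε⟩).symm (hG 0)
  | succ n ih =>
    obtain ⟨hε, hd₀, hd, hn⟩ := h
    have hk (x : G 0) : d 0 x ∈ LinearMap.ker (d 1) := (hd 0 _).2 ⟨x, rfl⟩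
    refine ⟨G 0, ModuleCat.of R (LinearMap.ker (d 1)), ε, (d 0).codRestrict _ hk, hG 0,
      ⟨hε, fun y => ?_, fun x => ?_⟩,
      ih (G := fun i => G (i + 1)) (d := fun i => d (i + 1)) (ε := Submodule.subtype _)
        ⟨Subtype.val_injective, LinearMap.exact_subtype_ker_map _, fun i => hd (i + 1),
          fun i hi => hn (i + 1) (by lia)⟩ fun i => hG (i + 1)⟩
    · obtain ⟨x, hx⟩ := (hd 0 y).1 y.2
      exact ⟨x, Subtype.ext hx⟩
    · rw [← hd₀ x]
      exact Subtype.ext_iff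

lemma exists_isFiniteCoresolution (h₀ : ∀ X : ModuleCat.{u} R, Subsingleton X → 𝒞 X)
    (h : CoresolutionLE 𝒞 n M) :
    ∃ (G : ℕ → ModuleCat.{u} R) (d : ∀ i, G i →ₗ[R] G (i + 1)) (ε : M →ₗ[R] G 0),
      IsFiniteCoresolution R M n G d ε ∧ ∀ i, 𝒞 (G i) := by
  induction n generalizing M with
  | zero =>
    let G : ℕ → ModuleCat.{u} R
      | 0 => M
      | _ + 1 => ModuleCat.of R PUnit
    refine ⟨G, fun i => 0, LinearMap.id, ⟨Function.injective_id, (shortExactSeq_id_zero M).2.2,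
      fun i x => ⟨fun _ => ⟨0, rfl⟩, fun _ => rfl⟩, ?_⟩, ?_⟩
    · rintro (_ | i) hi x
      · exact absurd hi (lt_irrefl 0)
      · rfl
    · rintro (_ | i)
      · exact h
      · exact h₀ (ModuleCat.of R PUnit) inferInstance
  | succ n ih =>
    obtain ⟨H, Y, f, g, hH, hS, hY⟩ := h
    obtain ⟨G, d, ε, ⟨hε, hd₀, hd, hn⟩, hG⟩ := ih hY
    let G' : ℕ → ModuleCat.{u} R
      | 0 => H
      | i + 1 => G i
    let d' : ∀ i, G' i →ₗ[R] G' (i + 1)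
      | 0 => ε ∘ₗ g
      | i + 1 => d i
    refine ⟨G', d', f, ⟨hS.1, fun x => ?_, ?_, ?_⟩, ?_⟩
    · rw [← hS.2.2 x]
      exact map_eq_zero_iff ε hε
    · rintro (_ | i) x
      · refine (hd₀ x).trans ⟨?_, ?_⟩
        · rintro ⟨y, rfl⟩
          obtain ⟨z, rfl⟩ := hS.2.1 y
          exact ⟨z, rfl⟩
        · rintro ⟨z, rfl⟩
          exact ⟨g z, rfl⟩
      · exact hd i x
    · rintro (_ | i) hi x
      · exact absurd hi (Nat.not_lt_zero _)
      · exact hn i (by lia) x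
    · rintro (_ | i)
      · exact hH
      · exact hG i

lemma extZero (hM : CoresolutionLE 𝒞 n M) {W : ModuleCat.{u} R}
    (hW : ∀ X, 𝒞 X → ∀ i, 1 ≤ i → ExtZero W X i) {i : ℕ} (hi : n < i) : ExtZero W M i := by
  induction n generalizing M i with
  | zero => exact hW M hM i hi
  | succ n ih =>
    obtain ⟨G, Y, f, g, hG, hS, hY⟩ := hM
    obtain ⟨i, rfl⟩ : ∃ j, i = j + 1 := ⟨i - 1, by lia⟩
    exact hS.extZero_left (ih hY (by lia)) (hW G hG _ (by lia))

/-- Vanishing of `Ext` extends from injective source modules to those of finite injective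
dimension. -/
lemma extZero_source (hM : CoresolutionLE (fun E => Module.Injective R E) m M)
    (h : ∀ E : ModuleCat.{u} R, Module.Injective R E → ∀ i, n < i → ExtZero E N i) {i : ℕ}
    (hi : n < i) : ExtZero M N i := by
  induction m generalizing M i with
  | zero => exact h M hM i hi
  | succ m ih =>
    obtain ⟨E, Y, f, g, hE, hS, hY⟩ := hM
    exact hS.extZero_source_left (h E hE i hi) (ih hY (by lia))

/-- A module of finite injective dimension has injective dimension at most `n` as soon as `Ext^i`
vanishes for `i > n` on injective source modules. -/
lemma of_extZero (hM : CoresolutionLE (fun E => Module.Injective R E) m M)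
    (h : ∀ E : ModuleCat.{u} R, Module.Injective R E → ∀ i, n < i → ExtZero E M i) :
    CoresolutionLE (fun E => Module.Injective R E) n M := by
  induction n generalizing m M with
  | zero =>
    obtain ⟨I, Y, f, g, hI, hS, hY⟩ := hM.succ fun X _ => injective_of_subsingleton X
    exact hS.injective_left hI (hY.extZero_source h one_pos)
  | succ n ih =>
    obtain ⟨I, Y, f, g, hI, hS, hY⟩ := hM.succ fun X _ => injective_of_subsingleton X
    exact ⟨I, Y, f, g, hI, hS, ih hY fun E hE i hi => hS.extZero_right
      (ExtZero.of_injective E hI (by lia)) (h E hE (i + 1) (by lia))⟩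

end CoresolutionLE

variable {𝒯 : ModuleCat.{u} R → Prop} {M : ModuleCat.{u} R} {m n : ℕ}

/-- A module of finite relative Gorenstein injective dimension embeds into an acyclically resolved
module with cokernel of finite injective dimension. -/
lemma CoresolutionLE.exists_approximation (h𝒯 : ∀ E : ModuleCat.{u} R, Module.Injective R E → 𝒯 E)
    (hM : CoresolutionLE (AcyclicallyResolved 𝒯) (m + 1) M) :
    ∃ (H L : ModuleCat.{u} R) (f : M →ₗ[R] H) (g : H →ₗ[R] L), AcyclicallyResolved 𝒯 H ∧
      ShortExactSeq R M H L f g ∧ CoresolutionLE (fun E => Module.Injective R E) m L := by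
  induction m generalizing M with
  | zero =>
    obtain ⟨G, C, i, p, hG, hS, hC⟩ := hM
    obtain ⟨K, I, j, q, hI, hK, hK'⟩ := AcyclicallyResolved.exists_syzygy hC
    obtain ⟨X, a, b, c, d, h₁, h₂⟩ := hS.pullback hK
    exact ⟨X, I, a, b, .extension h𝒯 h₂ hK' hG, h₁, hI⟩
  | succ m ih =>
    obtain ⟨G, C, i, p, hG, hS, hC⟩ := hM
    obtain ⟨H, L, φ, ψ, hH, hφ, hL⟩ := ih hC
    obtain ⟨K, I, j, q, hI, hK, hK'⟩ := hH.exists_syzygy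
    obtain ⟨Q, j', q', c, d, hQ, hQI⟩ := hK.comap hφ
    obtain ⟨X, a, b, c', d', h₁, h₂⟩ := hS.pullback hQ
    exact ⟨X, Q, a, b, .extension h𝒯 h₂ hK' hG, h₁, I, L, c, d, hI, hQI, hL⟩

/-- Among modules of finite relative Gorenstein injective dimension, that dimension is detected by
vanishing of `Ext` on injective source modules. -/
lemma CoresolutionLE.of_extZero_injective (h𝒯 : ∀ E : ModuleCat.{u} R, Module.Injective R E → 𝒯 E)
    (hM : CoresolutionLE (AcyclicallyResolved 𝒯) m M)
    (h : ∀ E : ModuleCat.{u} R, Module.Injective R E → ∀ i, n < i → ExtZero E M i) :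
    CoresolutionLE (AcyclicallyResolved 𝒯) n M := by
  obtain ⟨H, L, f, g, hH, hS, hL⟩ := (hM.succ fun X _ =>
    .of_injective (injective_of_subsingleton X)).exists_approximation h𝒯
  have hEL (E : ModuleCat.{u} R) (hE : Module.Injective R E) (i : ℕ) (hi : 1 ≤ i) (hn : n ≤ i) :
      ExtZero E L i :=
    hS.extZero_right (hH.extAcyclic E (h𝒯 E hE) i hi) (h E hE (i + 1) (by lia))
  cases n with
  | zero =>
    have hL₀ : Module.Injective R L :=
      hL.of_extZero (n := 0) fun E hE i hi => hEL E hE i hi (Nat.zero_le i)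
    obtain ⟨_, _, -, hS'⟩ := hS.exists_reverse (h L hL₀ 1 one_pos)
    exact .cokernel h𝒯 hS' (.of_injective hL₀) hH
  | succ n =>
    exact ⟨H, L, f, g, hH, hS,
      (hL.of_extZero fun E hE i hi => hEL E hE i (by lia) hi).mono_class
        fun _ => .of_injective⟩

lemma exists_isFiniteCoresolution_gorensteinRelInjective_iff :
    (∃ (G : ℕ → ModuleCat.{u} R) (d : ∀ i, G i →ₗ[R] G (i + 1)) (ε : M →ₗ[R] G 0),
      IsFiniteCoresolution R M n G d ε ∧ ∀ i, GorensteinRelInjective R 𝒯 (G i)) ↔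
    CoresolutionLE (AcyclicallyResolved 𝒯) n M := by
  refine ⟨?_, fun h => ?_⟩
  · rintro ⟨G, d, ε, h, hG⟩
    exact (CoresolutionLE.of_isFiniteCoresolution (fun _ _ e => .of_linearEquiv e) h hG).mono_class
      fun _ => gorensteinRelInjective_iff.1
  · exact (h.mono_class fun _ => gorensteinRelInjective_iff.2).exists_isFiniteCoresolution
      fun X _ => gorensteinRelInjective_iff.2 (.of_injective (injective_of_subsingleton X))

lemma gwidLE_iff : GwidLE R M n ↔ CoresolutionLE (AcyclicallyResolved (WeakInjective R)) n M :=
  exists_isFiniteCoresolution_gorensteinRelInjective_iff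

lemma gidLE_iff : GidLE R M n ↔
    CoresolutionLE (AcyclicallyResolved fun E => Module.Injective R E) n M :=
  exists_isFiniteCoresolution_gorensteinRelInjective_iff

lemma GorensteinWeakInjective.gorensteinInjective (h : GorensteinWeakInjective R M) :
    GorensteinInjective R M := by
  obtain ⟨I, d, π, ⟨hI, hd, hW⟩, hπ⟩ := h
  exact ⟨I, d, π, ⟨hI, hd, fun E hE => hW E (weakInjective_of_injective hE)⟩, hπ⟩

lemma GwidLE.gidLE (h : GwidLE R M n) : GidLE R M n := by
  obtain ⟨G, d, ε, h, hG⟩ := h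
  exact ⟨G, d, ε, h, fun i => (hG i).gorensteinInjective⟩

lemma GwidLE.of_gidLE (hm : GwidLE R M m) (hn : GidLE R M n) : GwidLE R M n :=
  gwidLE_iff.2 ((gwidLE_iff.1 hm).of_extZero_injective (fun _ => weakInjective_of_injective)
    fun E hE _ hi => (gidLE_iff.1 hn).extZero (fun _ hX => hX.extAcyclic E hE) hi)

end GorensteinDimension

/-- `Gid_R M ≤ Gwid_R M`, with equality when `Gwid_R M < ∞`. -/
theorem gid_le_gwid (M : ModuleCat.{u} R) :
    Gid R M ≤ Gwid R M ∧ (Gwid R M ≠ ⊤ → Gid R M = Gwid R M) := by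
  have hle : Gid R M ≤ Gwid R M :=
    sInf_le_sInf fun c ⟨n, hc, h⟩ => ⟨n, hc, h.gidLE⟩
  refine ⟨hle, fun hfin => hle.antisymm (sInf_le_sInf fun c ⟨n, hc, h⟩ => ⟨n, hc, ?_⟩)⟩
  obtain ⟨m, hm⟩ : ∃ m, GwidLE R M m := by
    by_contra! hne
    exact hfin (sInf_eq_top.2 fun c ⟨m, _, hm⟩ => (hne m hm).elim)
  exact hm.of_gidLE h
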